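/- Let 1 < p < 2. Let ρ_j > 0, j = 0,1,2,…, satisfy ω(ρ_j) = 2^{-j} with ρ_0 = 2π, where ω is a modulus of continuity with ω(2π) = 1 and ω(2δ) < 2ω(δ) for 0 < δ ≤ 2π. Let E ⊆ [0,2π] be a closed set such that for every j ≥ 0, E is covered by 2^j closed intervals of equal length ρ_j. Then there exists c_p > 0 such that: for every λ ≥ 2 and every real function g on [0,2π] that is linear on each interval complementary to E in [0,2π], one has Σ_{|k| ≤ 2λ} |(e^{ig})^∧(k)|^p ≤ c_p · (Θ_p(λ))^p, where Θ_p(y) = (∫₁^y (χ^{-1}(1/τ))^p dτ)^{1/p} and χ(δ) = δ·ω(δ). The constant c_p is independent of λ and g. -/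

import Mathlib

open MeasureTheory Real Set
open scoped ENNReal

/-- The k-th Fourier coefficient of a (2π-periodic) function on the circle,
identified with a function on [0, 2π]. -/
noncomputable def fourierCoef (f : ℝ → ℂ) (k : ℤ) : ℂ :=
  (1 / (2 * (Real.pi : ℂ))) *
    ∫ t in (0:ℝ)..(2 * Real.pi), f t * Complex.exp (-Complex.I * (k : ℂ) * (t : ℂ))

/-- The A_p(𝕋) norm: ℓ^p norm of the sequence of Fourier coefficients
(valued in ℝ≥0∞ so that divergence gives ∞). -/
noncomputable def ApNorm (p : ℝ) (f : ℝ → ℂ) : ℝ≥0∞ :=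
  (∑' k : ℤ, ((‖fourierCoef f k‖₊ : ℝ≥0∞) ^ p)) ^ (1 / p)

/-!
Cut the circle into cells of length `ε`. Since `E` is covered by `N` intervals of length `ε`, all
but `O(N)` cells avoid `E`, and on a good cell of index `i` the function `e^{ig}` is a pure wave of
some frequency `aᵢ`; runs of adjacent good cells share their frequency, so only `O(N)` frequencies
occur. Keep the waves but translate their supports by `t`: the patched function obtained agrees
with `e^{ig}` except within `|t|` of a bad cell, while translation multiplies the `k`-th Fourier
coefficient of the piece of frequency `aᵢ` by `e^{i(aᵢ - k)t}`. Averaging over `t = εs` against a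
kernel in `s` of integral `1` whose Fourier transform lives in `[-1, 1]` therefore annihilates every
`k` at distance at least `1/ε` from all the `aᵢ`. Pairing with the trigonometric polynomial whose
coefficients are the conjugates of those of `e^{ig}`, and using Parseval's identity, one finds that
the squared Fourier coefficients of `e^{ig}` sum to `O(Nε)` off a set of `O(N/ε)` exceptional
frequencies.

By the covering hypothesis, `N` is of order `1/ω(ε)`, so that the number of exceptional frequencies
is of order `τ = 1/χ(ε)` and the sum of squares is of order `τε²`. As `x^p ≤ ε^(p-2) x² + ε^p`, a
set of `O(τ)` frequencies contributes `O(τε^p)` to the sum of `p`-th powers, its exceptional part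
aside, which is treated at the scale `2ε`. Descending to the coarsest scale bounds the whole sum by
`∑ τ_l χ⁻¹(1/τ_l)^p` over the dyadic scales, a lower sum for the integral of `χ⁻¹(1/τ)^p`.
-/

section FourierAnalysis

lemma norm_exp_neg_I_int_mul (k : ℤ) (t : ℝ) :
    ‖Complex.exp (-Complex.I * (k : ℂ) * (t : ℂ))‖ = 1 := by
  simpa [mul_assoc] using Complex.norm_exp_I_mul_ofReal (-(k * t))

lemma norm_fourierCoef_le_one {f : ℝ → ℂ} (hf : ∀ t, ‖f t‖ ≤ 1) (k : ℤ) :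
    ‖fourierCoef f k‖ ≤ 1 := by
  have hint : ‖∫ t in (0:ℝ)..(2 * π), f t * Complex.exp (-Complex.I * (k : ℂ) * (t : ℂ))‖ ≤
      1 * |2 * π - 0| :=
    intervalIntegral.norm_integral_le_of_norm_le_const fun t _ => by
      simpa only [norm_mul, norm_exp_neg_I_int_mul, mul_one] using hf t
  rw [sub_zero, abs_of_pos two_pi_pos, one_mul] at hint
  calc ‖fourierCoef f k‖ ≤ 1 / (2 * π) * (2 * π) := by
        simp only [fourierCoef, norm_mul, norm_div, norm_one, Complex.norm_ofNat,
          Complex.norm_of_nonneg pi_pos.le]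
        gcongr
    _ = 1 := by field_simp

lemma fourierCoef_of_not_intervalIntegrable {f : ℝ → ℂ}
    (hf : ¬ IntervalIntegrable f volume 0 (2 * π)) (k : ℤ) : fourierCoef f k = 0 := by
  rw [fourierCoef, intervalIntegral.integral_undef, mul_zero]
  refine fun h => hf ((h.mul_continuousOn (g := fun t : ℝ => Complex.exp (Complex.I * k * t))
    (by fun_prop)).congr fun t _ => ?_)
  rw [mul_assoc, ← Complex.exp_add]
  simp

/-- The trigonometric polynomial `∑ k ∈ A, d k e^{-ikt}`. -/
noncomputable def trigPoly (A : Finset ℤ) (d : ℤ → ℂ) (t : ℝ) : ℂ :=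
  ∑ k ∈ A, d k * Complex.exp (-Complex.I * (k : ℂ) * (t : ℂ))

variable (A : Finset ℤ) (d : ℤ → ℂ)

lemma continuous_trigPoly : Continuous (trigPoly A d) := by
  unfold trigPoly; fun_prop

lemma trigPoly_periodic : Function.Periodic (trigPoly A d) (2 * π) := by
  refine fun t => Finset.sum_congr rfl fun k _ => ?_
  congr 1
  exact Complex.exp_eq_exp_iff_exists_int.mpr ⟨-k, by push_cast; ring⟩

lemma integral_exp_I_int_mul (n : ℤ) :
    ∫ t in (0:ℝ)..(2 * π), Complex.exp (Complex.I * n * t) =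
      if n = 0 then (2 * π : ℂ) else 0 := by
  split_ifs with hn
  · simp [hn]
  · have hne : Complex.I * n ≠ 0 := mul_ne_zero Complex.I_ne_zero (by exact_mod_cast hn)
    have hexp : Complex.exp (Complex.I * n * ((2 * π : ℝ) : ℂ)) = 1 :=
      Complex.exp_eq_one_iff.mpr ⟨n, by push_cast; ring⟩
    rw [integral_exp_mul_complex hne, hexp]
    simp

lemma norm_sq_trigPoly (t : ℝ) : ((‖trigPoly A d t‖ ^ 2 : ℝ) : ℂ) = ∑ k ∈ A, ∑ l ∈ A,
    d k * starRingEnd ℂ (d l) * Complex.exp (Complex.I * ((l - k : ℤ) : ℂ) * t) := by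
  push_cast
  rw [← Complex.mul_conj', trigPoly, map_sum, Finset.sum_mul_sum]
  refine Finset.sum_congr rfl fun k _ => Finset.sum_congr rfl fun l _ => ?_
  rw [map_mul, ← Complex.exp_conj, mul_mul_mul_comm, ← Complex.exp_add]
  congr 2
  simp only [map_mul, map_neg, Complex.conj_I, Complex.conj_ofReal, map_intCast]
  ring

theorem integral_norm_sq_trigPoly (c : ℝ) :
    ∫ t in c..(c + 2 * π), ‖trigPoly A d t‖ ^ 2 = 2 * π * ∑ k ∈ A, ‖d k‖ ^ 2 := by
  have hper : Function.Periodic (fun t => ‖trigPoly A d t‖ ^ 2) (2 * π) :=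
    (trigPoly_periodic A d).comp fun z => ‖z‖ ^ 2
  rw [hper.intervalIntegral_add_eq c 0, zero_add, ← Complex.ofReal_inj,
    ← intervalIntegral.integral_ofReal]
  simp_rw [norm_sq_trigPoly]
  rw [intervalIntegral.integral_finsetSum
    fun k _ => Continuous.intervalIntegrable (by fun_prop) _ _]
  push_cast
  rw [Finset.mul_sum]
  refine Finset.sum_congr rfl fun k hk => ?_
  rw [intervalIntegral.integral_finsetSum
    fun l _ => Continuous.intervalIntegrable (by fun_prop) _ _]
  have hterm : ∀ l : ℤ, ∫ t in (0:ℝ)..(2 * π), d k * starRingEnd ℂ (d l) *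
      Complex.exp (Complex.I * ((l : ℂ) - k) * t) =
        if l = k then (2 * π * (‖d k‖ : ℂ) ^ 2 : ℂ) else 0 := by
    intro l
    have := integral_exp_I_int_mul (l - k)
    push_cast at this
    rw [intervalIntegral.integral_const_mul, this]
    split_ifs with h h' h'
    · rw [h', Complex.mul_conj']; ring
    · exact absurd (sub_eq_zero.mp h) h'
    · exact absurd (sub_eq_zero.mpr h') h
    · exact mul_zero _
  simp only [hterm, Finset.sum_ite_eq', hk, if_true]

theorem integral_mul_trigPoly_conj_fourierCoef {f : ℝ → ℂ}
    (hf : IntervalIntegrable f volume 0 (2 * π)) :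
    ∫ t in (0:ℝ)..(2 * π), f t * trigPoly A (fun k => starRingEnd ℂ (fourierCoef f k)) t =
      ((2 * π * ∑ k ∈ A, ‖fourierCoef f k‖ ^ 2 : ℝ) : ℂ) := by
  have hcoef : ∀ k : ℤ, ∫ t in (0:ℝ)..(2 * π), f t * Complex.exp (-Complex.I * k * t) =
      2 * π * fourierCoef f k := by
    intro k
    unfold fourierCoef
    have : (π : ℂ) ≠ 0 := by exact_mod_cast pi_ne_zero
    field_simp
  simp only [trigPoly, Finset.mul_sum, mul_left_comm (f _)]
  rw [intervalIntegral.integral_finsetSum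
    fun k _ => (hf.mul_continuousOn (by fun_prop)).const_mul _]
  push_cast
  refine Finset.sum_congr rfl fun k _ => ?_
  rw [intervalIntegral.integral_const_mul, hcoef, ← Complex.conj_mul']
  ring

end FourierAnalysis

section Kernel

open scoped SchwartzMap FourierTransform

/-- The bump function with value `1` at the origin and support in the ball of radius `1 / (2π)`,
as a Schwartz function. -/
noncomputable def frequencyBump : 𝓢(ℝ, ℂ) :=
  let b : ContDiffBump (0 : ℝ) :=
    ⟨1 / (4 * π), 1 / (2 * π), by positivity, by gcongr; norm_num⟩
  HasCompactSupport.toSchwartzMap (f := fun x : ℝ => ((b x : ℝ) : ℂ))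
    (b.hasCompactSupport.comp_left (g := fun x : ℝ => (x : ℂ)) Complex.ofReal_zero)
    (Complex.ofRealCLM.contDiff.comp b.contDiff)

lemma frequencyBump_zero : frequencyBump 0 = 1 :=
  congrArg ((↑) : ℝ → ℂ) (ContDiffBump.one_of_mem_closedBall _
    (Metric.mem_closedBall_self (by positivity)))

lemma frequencyBump_of_le_abs {v : ℝ} (hv : 1 / (2 * π) ≤ |v|) : frequencyBump v = 0 :=
  congrArg ((↑) : ℝ → ℂ) (ContDiffBump.zero_of_le_dist _ (by simpa using hv))

/-- A Schwartz function of integral `1` whose Fourier transform, normalised as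
`ξ ↦ ∫ s, κ s e^{iξs}`, vanishes for `|ξ| ≥ 1`. -/
noncomputable def bandlimitedKernel : 𝓢(ℝ, ℂ) := 𝓕⁻ frequencyBump

lemma integral_bandlimitedKernel_mul_exp (ξ : ℝ) :
    ∫ s, bandlimitedKernel s * Complex.exp (Complex.I * ξ * s) =
      frequencyBump (-ξ / (2 * π)) := by
  have hF : 𝓕 bandlimitedKernel = frequencyBump := by simp [bandlimitedKernel]
  rw [← hF, SchwartzMap.fourier_coe, Real.fourier_real_eq_integral_exp_smul]
  refine integral_congr_ae (.of_forall fun s => ?_)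
  dsimp only
  rw [smul_eq_mul, mul_comm]
  congr 2
  push_cast
  have : (π : ℂ) ≠ 0 := by exact_mod_cast pi_ne_zero
  field_simp

lemma integral_bandlimitedKernel : ∫ s, bandlimitedKernel s = 1 := by
  simpa [frequencyBump_zero] using integral_bandlimitedKernel_mul_exp 0

lemma integral_bandlimitedKernel_mul_exp_eq_zero {ξ : ℝ} (hξ : 1 ≤ |ξ|) :
    ∫ s, bandlimitedKernel s * Complex.exp (Complex.I * ξ * s) = 0 := by
  rw [integral_bandlimitedKernel_mul_exp]
  apply frequencyBump_of_le_abs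
  rw [abs_div, abs_neg, abs_of_pos two_pi_pos]
  gcongr

/-- The first moment `∫ ‖κ s‖ (1 + 2|s|) ds` of the bandlimited kernel `κ`; the weight is the
length, in units of a cell, of the `|s|`-neighbourhood of a cell. -/
noncomputable def kernelMoment : ℝ := ∫ s, ‖bandlimitedKernel s‖ * (1 + 2 * |s|)

lemma integrable_norm_bandlimitedKernel_mul :
    Integrable fun s => ‖bandlimitedKernel s‖ * (1 + 2 * |s|) := by
  refine (bandlimitedKernel.integrable.norm.add
    ((bandlimitedKernel.integrable_pow_mul volume 1).const_mul 2)).congr (.of_forall fun s => ?_)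
  simp only [Pi.add_apply, pow_one, Real.norm_eq_abs]
  ring

lemma one_le_kernelMoment : 1 ≤ kernelMoment := by
  calc (1 : ℝ) = ‖∫ s, bandlimitedKernel s‖ := by rw [integral_bandlimitedKernel, norm_one]
    _ ≤ ∫ s, ‖bandlimitedKernel s‖ := norm_integral_le_integral_norm _
    _ ≤ kernelMoment := integral_mono bandlimitedKernel.integrable.norm
        integrable_norm_bandlimitedKernel_mul fun s =>
          le_mul_of_one_le_right (norm_nonneg _) (by linarith [abs_nonneg s])

end Kernel

section Cells

/-- The indices of the bad cells: cells of length `ε` are numbered so that the cell of index `i` is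
`[iε, (i+1)ε)`, those of index in `[0, M)` fill a period, and `G` is the set of good ones. The two
cells adjacent to the period count as bad. -/
noncomputable def gaps (M : ℤ) (G : Finset ℤ) : Finset ℤ := Finset.Icc (-1) M \ G

/-- The function equal to `φ i` on the translate by `t` of the cell of index `i`, for `i ∈ G`, and
to `0` off these translates. -/
noncomputable def patch (ε : ℝ) (G : Finset ℤ) (φ : ℤ → ℝ → ℂ) (t x : ℝ) : ℂ :=
  ∑ i ∈ G, (Ico (i * ε + t) ((i + 1) * ε + t)).indicator (φ i) x

/-- The function `f` coincides with `φ i` inside each good cell, and the functions attached to two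
adjacent good cells are equal. -/
structure IsPatchwork (M : ℤ) (ε : ℝ) (G : Finset ℤ) (φ : ℤ → ℝ → ℂ) (f : ℝ → ℂ) : Prop where
  subset : G ⊆ Finset.Ico 0 M
  eqOn : ∀ i ∈ G, EqOn f (φ i) (Ioo (i * ε) ((i + 1) * ε))
  eq_succ : ∀ i ∈ G, i + 1 ∈ G → φ i = φ (i + 1)

variable {M : ℤ} {ε : ℝ} {G : Finset ℤ}

lemma mem_gaps_of_notMem {i : ℤ} (h₁ : -1 ≤ i) (h₂ : i ≤ M) (hi : i ∉ G) : i ∈ gaps M G :=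
  Finset.mem_sdiff.mpr ⟨Finset.mem_Icc.mpr ⟨h₁, h₂⟩, hi⟩

lemma ite_mem_eq_of_disjoint_gaps {α : Type*} [Zero α] {φ : ℤ → α} (hG : G ⊆ Finset.Ico 0 M)
    (hφ : ∀ i ∈ G, i + 1 ∈ G → φ i = φ (i + 1)) {i j : ℤ}
    (hij : Disjoint (Finset.uIcc i j) (gaps M G)) :
    (if i ∈ G then φ i else 0) = if j ∈ G then φ j else 0 := by
  wlog h : i ≤ j generalizing i j
  · exact (this (by rwa [Finset.uIcc_comm]) (le_of_not_ge h)).symm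
  rw [Finset.uIcc_of_le h] at hij
  induction j, h using Int.leInduction with
  | base => rfl
  | succ j hle ih =>
    rw [ih (hij.mono_left (Finset.Icc_subset_Icc_right (by lia)))]
    have hj : j ∉ gaps M G := Finset.disjoint_left.mp hij (by simp; lia)
    have hj' : j + 1 ∉ gaps M G := Finset.disjoint_left.mp hij (by simp; lia)
    by_cases h₁ : j ∈ G <;> by_cases h₂ : j + 1 ∈ G
    · simp only [if_pos h₁, if_pos h₂, hφ j h₁ h₂]
    · have := Finset.mem_Ico.mp (hG h₁)
      exact absurd (mem_gaps_of_notMem (by lia) (by lia) h₂) hj'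
    · have := Finset.mem_Ico.mp (hG h₂)
      exact absurd (mem_gaps_of_notMem (by lia) (by lia) h₁) hj
    · simp only [if_neg h₁, if_neg h₂]

lemma card_image_le_card_gaps {α : Type*} [DecidableEq α] {a : ℤ → α}
    (hG : G ⊆ Finset.Ico 0 M) (ha : ∀ i ∈ G, i + 1 ∈ G → a i = a (i + 1)) :
    (G.image a).card ≤ (gaps M G).card := by
  suffices h : ∀ i : ℤ, -1 ≤ i → i ∈ G → a i ∈ (gaps M G).image fun j => a (j + 1) by
    refine (Finset.card_le_card (Finset.image_subset_iff.mpr fun i hi => h i ?_ hi)).trans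
      Finset.card_image_le
    linarith [(Finset.mem_Ico.mp (hG hi)).1]
  intro i hi
  induction i, hi using Int.leInduction with
  | base => exact fun h => absurd (Finset.mem_Ico.mp (hG h)).1 (by lia)
  | succ i hle ih =>
    intro hi
    by_cases h : i ∈ G
    · exact ha i h hi ▸ ih h
    · have := Finset.mem_Ico.mp (hG hi)
      exact Finset.mem_image_of_mem _ (mem_gaps_of_notMem hle (by lia) h)

lemma floor_div_mul_le (hε : 0 < ε) (x : ℝ) : ⌊x / ε⌋ * ε ≤ x :=
  (le_div_iff₀ hε).mp (Int.floor_le _)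

lemma lt_floor_div_add_one_mul (hε : 0 < ε) (x : ℝ) : x < (⌊x / ε⌋ + 1) * ε :=
  (div_lt_iff₀ hε).mp (Int.lt_floor_add_one _)

variable {φ : ℤ → ℝ → ℂ} {f : ℝ → ℂ} {t : ℝ}

lemma patch_apply (hε : 0 < ε) (x : ℝ) :
    patch ε G φ t x = if ⌊(x - t) / ε⌋ ∈ G then φ ⌊(x - t) / ε⌋ x else 0 := by
  have hmem : ∀ i : ℤ, x ∈ Ico (i * ε + t) ((i + 1) * ε + t) ↔ ⌊(x - t) / ε⌋ = i := by
    intro i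
    rw [Int.floor_eq_iff, le_div_iff₀ hε, div_lt_iff₀ hε, mem_Ico, le_sub_iff_add_le,
      sub_lt_iff_lt_add]
  classical
  simp only [patch, indicator_apply, hmem, Finset.sum_ite_eq]

lemma norm_patch_le_indicator (hε : 0 < ε) (hM : M * ε = 2 * π) (hG : G ⊆ Finset.Ico 0 M)
    (hφ : ∀ i x, ‖φ i x‖ ≤ 1) (x : ℝ) :
    ‖patch ε G φ t x‖ ≤ (Ico t (2 * π + t)).indicator 1 x := by
  rw [patch_apply hε]
  split_ifs with h
  · obtain ⟨h₀, h₁⟩ := Finset.mem_Ico.mp (hG h)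
    have hlow := floor_div_mul_le hε (x - t)
    have hup := lt_floor_div_add_one_mul hε (x - t)
    have h₀' : (0 : ℝ) ≤ ⌊(x - t) / ε⌋ * ε := mul_nonneg (by exact_mod_cast h₀) hε.le
    have h₁' : ((⌊(x - t) / ε⌋ : ℝ) + 1) * ε ≤ 2 * π :=
      hM ▸ mul_le_mul_of_nonneg_right (by exact_mod_cast h₁) hε.le
    rw [indicator_of_mem (mem_Ico.mpr ⟨by linarith, by linarith⟩)]
    exact hφ _ x
  · rw [norm_zero]
    exact indicator_nonneg (fun _ _ => zero_le_one) x

lemma norm_indicator_sub_patch_le (hε : 0 < ε) (hM : M * ε = 2 * π) (hG : G ⊆ Finset.Ico 0 M)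
    (hφ : ∀ i x, ‖φ i x‖ ≤ 1) (hf : ∀ x, ‖f x‖ ≤ 1) (x : ℝ) :
    ‖(Ico 0 (2 * π)).indicator f x - patch ε G φ t x‖ ≤
      (Ico 0 (2 * π)).indicator 1 x + (Ico t (2 * π + t)).indicator 1 x := by
  refine (norm_sub_le _ _).trans (add_le_add ?_ (norm_patch_le_indicator hε hM hG hφ x))
  rw [norm_indicator_eq_indicator_norm]
  exact indicator_le_indicator (hf x)

lemma indicator_eq_of_floor_notMem_gaps (hε : 0 < ε) (hM : M * ε = 2 * π)
    (h : IsPatchwork M ε G φ f) {x : ℝ} (hx : ∀ i : ℤ, x ≠ i * ε) (hgap : ⌊x / ε⌋ ∉ gaps M G) :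
    (Ico 0 (2 * π)).indicator f x = (if ⌊x / ε⌋ ∈ G then φ ⌊x / ε⌋ else 0) x := by
  have hlow := floor_div_mul_le hε x
  have hup := lt_floor_div_add_one_mul hε x
  split_ifs with hmem
  · have hpatch := norm_patch_le_indicator (t := 0) (φ := fun _ _ => 1) hε hM h.subset (by simp) x
    rw [patch_apply hε, sub_zero, if_pos hmem, norm_one, add_zero] at hpatch
    rw [indicator_of_mem (by_contra fun hx' => by norm_num [indicator_of_notMem hx'] at hpatch)]
    exact h.eqOn _ hmem ⟨hlow.lt_of_ne (hx _).symm, hup⟩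
  · refine indicator_of_notMem (s := Ico 0 (2 * π))
      (fun ⟨h₀, h₁⟩ => hgap (mem_gaps_of_notMem ?_ ?_ hmem)) f
    · linarith [Int.floor_nonneg.mpr (div_nonneg h₀ hε.le)]
    · exact Int.floor_le_iff.mpr ((div_lt_iff₀ hε).mpr (by linarith))

lemma mem_thickened_cell_of_mem_uIcc_floor (hε : 0 < ε) {x : ℝ} {m : ℤ}
    (hm : m ∈ Finset.uIcc ⌊x / ε⌋ ⌊(x - t) / ε⌋) :
    x ∈ Icc (m * ε - |t|) ((m + 1) * ε + |t|) := by
  obtain ⟨hmin, hmax⟩ := Finset.mem_Icc.mp hm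
  have hx := floor_div_mul_le hε x
  have hx' := lt_floor_div_add_one_mul hε x
  have hxt := floor_div_mul_le hε (x - t)
  have hxt' := lt_floor_div_add_one_mul hε (x - t)
  have hmono {i j : ℤ} (hij : i ≤ j) : (i : ℝ) * ε ≤ j * ε := by gcongr
  constructor
  · rcases le_max_iff.mp hmax with hle | hle <;>
      linarith [hmono hle, neg_abs_le t, abs_nonneg t]
  · rcases min_le_iff.mp hmin with hle | hle <;>
      linarith [hmono hle, le_abs_self t, abs_nonneg t]

lemma norm_indicator_sub_patch_le_sum_gaps (hε : 0 < ε) (hM : M * ε = 2 * π)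
    (h : IsPatchwork M ε G φ f) (hφ : ∀ i x, ‖φ i x‖ ≤ 1) (hf : ∀ x, ‖f x‖ ≤ 1) {x : ℝ}
    (hx : ∀ i : ℤ, x ≠ i * ε) :
    ‖(Ico 0 (2 * π)).indicator f x - patch ε G φ t x‖ ≤
      2 * ∑ m ∈ gaps M G, (Icc (m * ε - |t|) ((m + 1) * ε + |t|)).indicator 1 x := by
  have hnonneg : ∀ m ∈ gaps M G,
      (0 : ℝ) ≤ (Icc (m * ε - |t|) ((m + 1) * ε + |t|)).indicator 1 x :=
    fun _ _ => indicator_nonneg (fun _ _ => zero_le_one) x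
  by_cases hdisj : Disjoint (Finset.uIcc ⌊x / ε⌋ ⌊(x - t) / ε⌋) (gaps M G)
  · rw [patch_apply hε, indicator_eq_of_floor_notMem_gaps hε hM h hx
      (Finset.disjoint_left.mp hdisj Finset.left_mem_uIcc),
      ite_mem_eq_of_disjoint_gaps h.subset h.eq_succ hdisj]
    have := Finset.sum_nonneg hnonneg
    split_ifs <;> simpa using this
  · obtain ⟨m, hm, hgap⟩ := Finset.not_disjoint_iff.mp hdisj
    have hxm := mem_thickened_cell_of_mem_uIcc_floor hε hm
    have hone : (1 : ℝ) ≤ ∑ m ∈ gaps M G,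
        (Icc (m * ε - |t|) ((m + 1) * ε + |t|)).indicator 1 x := by
      refine le_trans ?_ (Finset.single_le_sum hnonneg hgap)
      rw [indicator_of_mem hxm, Pi.one_apply]
    have hbound := norm_indicator_sub_patch_le (t := t) hε hM h.subset hφ hf x
    have hle_one : ∀ s : Set ℝ, s.indicator (1 : ℝ → ℝ) x ≤ 1 :=
      fun s => indicator_le_self' (fun _ _ => zero_le_one) x
    linarith [hle_one (Ico 0 (2 * π)), hle_one (Ico t (2 * π + t))]

end Cells

section Pairing

variable {M : ℤ} {ε : ℝ} {G : Finset ℤ} {φ : ℤ → ℝ → ℂ} {f : ℝ → ℂ} (A : Finset ℤ) (d : ℤ → ℂ)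

lemma integrable_indicator_mul_iff {s : Set ℝ} (hs : MeasurableSet s) {f P : ℝ → ℂ} :
    Integrable (fun x => s.indicator f x * P x) ↔ IntegrableOn (fun x => f x * P x) s := by
  rw [← integrable_indicator_iff hs]
  exact integrable_congr (.of_forall fun x => (indicator_mul_left s f P).symm)

lemma integral_indicator_mul {s : Set ℝ} (hs : MeasurableSet s) (f P : ℝ → ℂ) :
    ∫ x, s.indicator f x * P x = ∫ x in s, f x * P x := by
  rw [← integral_indicator hs]
  simp only [indicator_mul_left]

lemma integrable_indicator_Ico_mul {u v : ℝ} {f P : ℝ → ℂ} (hf : Continuous f)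
    (hP : Continuous P) : Integrable fun x => (Ico u v).indicator f x * P x :=
  (integrable_indicator_mul_iff measurableSet_Ico).mpr
    ((hf.mul hP).integrableOn_Icc.mono_set Ico_subset_Icc_self)

lemma integrable_patch_mul (hφ : ∀ i, Continuous (φ i)) {P : ℝ → ℂ} (hP : Continuous P) (t : ℝ) :
    Integrable fun x => patch ε G φ t x * P x := by
  simp only [patch, Finset.sum_mul]
  exact integrable_finsetSum _ fun i _ => integrable_indicator_Ico_mul (hφ i) hP

lemma integrable_indicator_norm_sq_trigPoly (c : ℝ) :
    Integrable ((Ico c (2 * π + c)).indicator fun x => ‖trigPoly A d x‖ ^ 2) :=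
  (((continuous_trigPoly A d).norm.pow 2).integrableOn_Icc.mono_set
    Ico_subset_Icc_self).integrable_indicator measurableSet_Ico

lemma integral_indicator_norm_sq_trigPoly (c : ℝ) :
    ∫ x, (Ico c (2 * π + c)).indicator (fun x => ‖trigPoly A d x‖ ^ 2) x =
      2 * π * ∑ k ∈ A, ‖d k‖ ^ 2 := by
  rw [integral_indicator measurableSet_Ico, integral_Ico_eq_integral_Ioc,
    ← intervalIntegral.integral_of_le (by linarith [pi_pos]), add_comm,
    integral_norm_sq_trigPoly]

lemma integrable_indicator_thickened_cell (m : ℤ) (t : ℝ) : Integrable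
    ((Icc (m * ε - |t|) ((m + 1) * ε + |t|)).indicator (1 : ℝ → ℝ)) :=
  continuous_one.integrableOn_Icc.integrable_indicator measurableSet_Icc

lemma integral_indicator_thickened_cell (hε : 0 < ε) (m : ℤ) (t : ℝ) :
    ∫ x, (Icc (m * ε - |t|) ((m + 1) * ε + |t|)).indicator (1 : ℝ → ℝ) x = ε + 2 * |t| := by
  rw [integral_indicator_one measurableSet_Icc,
    Real.volume_real_Icc_of_le (by linarith [abs_nonneg t])]
  ring

lemma norm_indicator_sub_patch_mul_le (hε : 0 < ε) (hM : M * ε = 2 * π)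
    (h : IsPatchwork M ε G φ f) (hφ : ∀ i x, ‖φ i x‖ ≤ 1) (hf : ∀ x, ‖f x‖ ≤ 1) {θ : ℝ}
    (hθ : 0 < θ) (t : ℝ) (P : ℝ → ℂ) {x : ℝ} (hx : ∀ i : ℤ, x ≠ i * ε) :
    ‖((Ico 0 (2 * π)).indicator f x - patch ε G φ t x) * P x‖ ≤
      θ * (∑ m ∈ gaps M G, (Icc (m * ε - |t|) ((m + 1) * ε + |t|)).indicator 1 x) +
        ((Ico 0 (2 * π)).indicator (fun x => ‖P x‖ ^ 2) x +
          (Ico t (2 * π + t)).indicator (fun x => ‖P x‖ ^ 2) x) / (2 * θ) := by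
  have hgap := norm_indicator_sub_patch_le_sum_gaps (t := t) hε hM h hφ hf hx
  have htwo := norm_indicator_sub_patch_le (t := t) hε hM h.subset hφ hf x
  have amgm : ‖P x‖ ≤ θ / 2 + ‖P x‖ ^ 2 / (2 * θ) := by
    have : θ / 2 + ‖P x‖ ^ 2 / (2 * θ) - ‖P x‖ = (θ - ‖P x‖) ^ 2 / (2 * θ) := by field_simp; ring
    rw [← sub_nonneg, this]
    positivity
  have hind (s : Set ℝ) : s.indicator 1 x * ‖P x‖ ^ 2 = s.indicator (fun x => ‖P x‖ ^ 2) x := by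
    by_cases hxs : x ∈ s <;> simp [hxs]
  set D := (Ico 0 (2 * π)).indicator f x - patch ε G φ t x
  calc ‖D * P x‖ = ‖D‖ * ‖P x‖ := norm_mul _ _
    _ ≤ ‖D‖ * (θ / 2 + ‖P x‖ ^ 2 / (2 * θ)) := by gcongr
    _ = ‖D‖ * (θ / 2) + ‖D‖ * (‖P x‖ ^ 2 / (2 * θ)) := mul_add _ _ _
    _ ≤ 2 * (∑ m ∈ gaps M G, (Icc (m * ε - |t|) ((m + 1) * ε + |t|)).indicator 1 x) * (θ / 2) +
        ((Ico 0 (2 * π)).indicator 1 x + (Ico t (2 * π + t)).indicator 1 x) *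
          (‖P x‖ ^ 2 / (2 * θ)) := by gcongr
    _ = _ := by rw [← hind, ← hind]; ring

theorem norm_integral_sub_patch_mul_trigPoly_le (hε : 0 < ε) (hM : M * ε = 2 * π)
    (h : IsPatchwork M ε G φ f) (hφ : ∀ i x, ‖φ i x‖ ≤ 1) (hf : ∀ x, ‖f x‖ ≤ 1) {θ : ℝ}
    (hθ : 0 < θ) (t : ℝ) :
    ‖∫ x, ((Ico 0 (2 * π)).indicator f x - patch ε G φ t x) * trigPoly A d x‖ ≤
      θ * ((gaps M G).card * (ε + 2 * |t|)) + 2 * π * (∑ k ∈ A, ‖d k‖ ^ 2) / θ := by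
  have hcells : ∀ᵐ x : ℝ, ∀ i : ℤ, x ≠ i * ε := ae_all_iff.mpr fun i => Measure.ae_ne _ _
  have hnear : Integrable fun x => ∑ m ∈ gaps M G,
      (Icc (m * ε - |t|) ((m + 1) * ε + |t|)).indicator (1 : ℝ → ℝ) x :=
    integrable_finsetSum _ fun m _ => integrable_indicator_thickened_cell m t
  have henergy (c : ℝ) := integrable_indicator_norm_sq_trigPoly A d c
  have henergy₀ : Integrable ((Ico 0 (2 * π)).indicator fun x => ‖trigPoly A d x‖ ^ 2) := by
    simpa only [add_zero] using henergy 0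
  have hint₀ := integral_indicator_norm_sq_trigPoly A d 0
  rw [add_zero] at hint₀
  refine (norm_integral_le_of_norm_le ((hnear.const_mul θ).add ((henergy₀.add
    (henergy t)).div_const (2 * θ))) (hcells.mono fun x hx =>
      norm_indicator_sub_patch_mul_le hε hM h hφ hf hθ t _ hx)).trans_eq ?_
  refine (integral_add (hnear.const_mul θ) ((henergy₀.add (henergy t)).div_const _)).trans ?_
  rw [integral_const_mul, integral_finsetSum _ fun m _ => integrable_indicator_thickened_cell m t,
    integral_div, integral_add' henergy₀ (henergy t), hint₀, integral_indicator_norm_sq_trigPoly]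
  simp only [integral_indicator_thickened_cell hε, Finset.sum_const, nsmul_eq_mul]
  ring

end Pairing

section Averaging

/-- The function `x ↦ e^{i(ax + b)}`, of constant frequency `a`. -/
noncomputable def wave (a b x : ℝ) : ℂ := Complex.exp (Complex.I * ((a * x + b : ℝ) : ℂ))

lemma norm_wave (a b x : ℝ) : ‖wave a b x‖ = 1 := Complex.norm_exp_I_mul_ofReal _

lemma continuous_wave (a b : ℝ) : Continuous (wave a b) := by
  unfold wave; fun_prop

lemma integral_indicator_wave_mul_exp {u v : ℝ} (huv : u ≤ v) (a b t : ℝ) (k : ℤ) :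
    ∫ x, (Ico (u + t) (v + t)).indicator (wave a b) x * Complex.exp (-Complex.I * k * x) =
      Complex.exp (Complex.I * ((a - k : ℝ) : ℂ) * t) *
        ∫ x in u..v, wave a b x * Complex.exp (-Complex.I * k * x) := by
  rw [integral_indicator_mul measurableSet_Ico, integral_Ico_eq_integral_Ioc,
    ← intervalIntegral.integral_of_le (by linarith),
    ← intervalIntegral.integral_comp_add_right, ← intervalIntegral.integral_const_mul]
  refine intervalIntegral.integral_congr fun x _ => ?_
  simp only [wave, ← Complex.exp_add]
  congr 1
  push_cast
  ring

variable {M : ℤ} {ε : ℝ} {G : Finset ℤ} {a b : ℤ → ℝ} (A : Finset ℤ) (d : ℤ → ℂ)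

lemma integral_patch_wave_mul_trigPoly (hε : 0 < ε) (t : ℝ) :
    ∫ x, patch ε G (fun i => wave (a i) (b i)) t x * trigPoly A d x =
      ∑ i ∈ G, ∑ k ∈ A, Complex.exp (Complex.I * ((a i - k : ℝ) : ℂ) * t) *
        (d k * ∫ x in (i * ε)..((i + 1) * ε),
          wave (a i) (b i) x * Complex.exp (-Complex.I * k * x)) := by
  have hint (i k : ℤ) : Integrable fun x : ℝ => d k *
      ((Ico (i * ε + t) ((i + 1) * ε + t)).indicator (wave (a i) (b i)) x *
        Complex.exp (-Complex.I * k * x)) :=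
    (integrable_indicator_Ico_mul (continuous_wave _ _) (by fun_prop)).const_mul _
  simp only [patch, trigPoly, Finset.sum_mul_sum, mul_left_comm _ (d _)]
  rw [integral_finsetSum _ fun i _ => integrable_finsetSum _ fun k _ => hint i k]
  refine Finset.sum_congr rfl fun i _ => ?_
  rw [integral_finsetSum _ fun k _ => hint i k]
  refine Finset.sum_congr rfl fun k _ => ?_
  rw [integral_const_mul, integral_indicator_wave_mul_exp (by nlinarith)]

lemma integrable_bandlimitedKernel_mul_exp (ξ : ℝ) :
    Integrable fun s : ℝ => bandlimitedKernel s * Complex.exp (Complex.I * ξ * s) :=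
  bandlimitedKernel.integrable.mul_bdd (c := 1) (by fun_prop) (.of_forall fun s => by
    simpa [mul_assoc] using (Complex.norm_exp_I_mul_ofReal (ξ * s)).le)

lemma bandlimitedKernel_mul_integral_patch (hε : 0 < ε) (s : ℝ) :
    bandlimitedKernel s *
      ∫ x, patch ε G (fun i => wave (a i) (b i)) (ε * s) x * trigPoly A d x =
    ∑ i ∈ G, ∑ k ∈ A,
      bandlimitedKernel s * Complex.exp (Complex.I * ((ε * (a i - k) : ℝ) : ℂ) * s) *
        (d k * ∫ x in (i * ε)..((i + 1) * ε),
          wave (a i) (b i) x * Complex.exp (-Complex.I * k * x)) := by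
  rw [integral_patch_wave_mul_trigPoly A d hε, Finset.mul_sum]
  refine Finset.sum_congr rfl fun i _ => ?_
  rw [Finset.mul_sum]
  refine Finset.sum_congr rfl fun k _ => ?_
  rw [← mul_assoc]
  congr 3
  push_cast
  ring

lemma integrable_bandlimitedKernel_mul_integral_patch (hε : 0 < ε) :
    Integrable fun s => bandlimitedKernel s *
      ∫ x, patch ε G (fun i => wave (a i) (b i)) (ε * s) x * trigPoly A d x := by
  simp_rw [bandlimitedKernel_mul_integral_patch A d hε]
  exact integrable_finsetSum _ fun i _ => integrable_finsetSum _ fun k _ =>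
    (integrable_bandlimitedKernel_mul_exp _).mul_const _

theorem integral_bandlimitedKernel_mul_integral_patch_eq_zero (hε : 0 < ε)
    (hfar : ∀ i ∈ G, ∀ k ∈ A, 1 ≤ |ε * (a i - k)|) :
    ∫ s, bandlimitedKernel s *
      ∫ x, patch ε G (fun i => wave (a i) (b i)) (ε * s) x * trigPoly A d x = 0 := by
  have hint (i k : ℤ) := (integrable_bandlimitedKernel_mul_exp (ε * (a i - k))).mul_const
    (d k * ∫ x in (i * ε)..((i + 1) * ε), wave (a i) (b i) x * Complex.exp (-Complex.I * k * x))
  simp_rw [bandlimitedKernel_mul_integral_patch A d hε]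
  rw [integral_finsetSum _ fun i _ => integrable_finsetSum _ fun k _ => hint i k]
  refine Finset.sum_eq_zero fun i hi => ?_
  rw [integral_finsetSum _ fun k _ => hint i k]
  refine Finset.sum_eq_zero fun k hk => ?_
  rw [integral_mul_const, integral_bandlimitedKernel_mul_exp_eq_zero (hfar i hi k hk), zero_mul]

lemma integral_indicator_sub_patch_mul {f P : ℝ → ℂ} (hP : Continuous P)
    (hf : IntervalIntegrable f volume 0 (2 * π)) (t : ℝ) :
    ∫ x, ((Ico 0 (2 * π)).indicator f x - patch ε G (fun i => wave (a i) (b i)) t x) * P x =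
      (∫ x in (0:ℝ)..(2 * π), f x * P x) -
        ∫ x, patch ε G (fun i => wave (a i) (b i)) t x * P x := by
  simp only [sub_mul]
  rw [integral_sub ((integrable_indicator_mul_iff measurableSet_Ico).mpr
      ((intervalIntegrable_iff_integrableOn_Ico_of_le two_pi_pos.le).mp
        (hf.mul_continuousOn hP.continuousOn)))
    (integrable_patch_mul (fun i => continuous_wave _ _) hP _),
    integral_indicator_mul measurableSet_Ico, integral_Ico_eq_integral_Ioc,
    ← intervalIntegral.integral_of_le two_pi_pos.le]

lemma norm_integral_bandlimitedKernel_mul_le {D : ℝ → ℂ} {C : ℝ}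
    (hD : ∀ s, ‖D s‖ ≤ C * (1 + 2 * |s|)) :
    ‖∫ s, bandlimitedKernel s * D s‖ ≤ C * kernelMoment := by
  rw [kernelMoment, ← integral_const_mul]
  refine norm_integral_le_of_norm_le (integrable_norm_bandlimitedKernel_mul.const_mul C)
    (.of_forall fun s => ?_)
  rw [norm_mul, mul_left_comm]
  exact mul_le_mul_of_nonneg_left (hD s) (norm_nonneg _)

lemma integral_bandlimitedKernel_mul_error {f : ℝ → ℂ} (hε : 0 < ε)
    (hf : IntervalIntegrable f volume 0 (2 * π))
    (hfar : ∀ i ∈ G, ∀ k ∈ A, 1 ≤ |ε * (a i - k)|) :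
    ∫ s, bandlimitedKernel s * ∫ x, ((Ico 0 (2 * π)).indicator f x -
        patch ε G (fun i => wave (a i) (b i)) (ε * s) x) *
          trigPoly A (fun k => starRingEnd ℂ (fourierCoef f k)) x =
      ((2 * π * ∑ k ∈ A, ‖fourierCoef f k‖ ^ 2 : ℝ) : ℂ) := by
  simp_rw [integral_indicator_sub_patch_mul (continuous_trigPoly _ _) hf,
    integral_mul_trigPoly_conj_fourierCoef A hf, mul_sub]
  rw [integral_sub (bandlimitedKernel.integrable.mul_const _)
    (integrable_bandlimitedKernel_mul_integral_patch A _ hε), integral_mul_const,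
    integral_bandlimitedKernel,
    integral_bandlimitedKernel_mul_integral_patch_eq_zero A _ hε hfar, one_mul, sub_zero]

theorem sum_norm_fourierCoef_sq_le_of_far {f : ℝ → ℂ} (hε : 0 < ε) (hM : M * ε = 2 * π)
    (h : IsPatchwork M ε G (fun i => wave (a i) (b i)) f) (hf : ∀ x, ‖f x‖ ≤ 1)
    (hfi : IntervalIntegrable f volume 0 (2 * π))
    (hfar : ∀ i ∈ G, ∀ k ∈ A, 1 ≤ |ε * (a i - k)|) :
    ∑ k ∈ A, ‖fourierCoef f k‖ ^ 2 ≤ kernelMoment ^ 2 * ((gaps M G).card * ε) := by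
  set K := kernelMoment
  set S := ∑ k ∈ A, ‖fourierCoef f k‖ ^ 2 with hS
  have hK : 1 ≤ K := one_le_kernelMoment
  have hS_nonneg : 0 ≤ S := Finset.sum_nonneg fun _ _ => by positivity
  -- `θ = 2K` makes the last term, once integrated against the kernel, half of `2πS`.
  have herror (s : ℝ) : ‖∫ x, ((Ico 0 (2 * π)).indicator f x -
      patch ε G (fun i => wave (a i) (b i)) (ε * s) x) *
        trigPoly A (fun k => starRingEnd ℂ (fourierCoef f k)) x‖ ≤
      (2 * K * ((gaps M G).card * ε) + π * S / K) * (1 + 2 * |s|) := by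
    have hle := norm_integral_sub_patch_mul_trigPoly_le A
      (fun k => starRingEnd ℂ (fourierCoef f k)) hε hM h (fun i x => (norm_wave _ _ x).le) hf
      (θ := 2 * K) (by positivity) (ε * s)
    simp only [RCLike.norm_conj, ← hS, abs_mul, abs_of_pos hε] at hle
    calc _ ≤ _ := hle
      _ = 2 * K * ((gaps M G).card * ε) * (1 + 2 * |s|) + π * S / K * 1 := by field_simp
      _ ≤ 2 * K * ((gaps M G).card * ε) * (1 + 2 * |s|) + π * S / K * (1 + 2 * |s|) := by
        gcongr; linarith [abs_nonneg s]
      _ = _ := by ring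
  have hbound := norm_integral_bandlimitedKernel_mul_le herror
  rw [integral_bandlimitedKernel_mul_error A hε hfi hfar, Complex.norm_of_nonneg (by positivity),
    add_mul, div_mul_cancel₀ _ (by positivity)] at hbound
  have hπS : 2 * S ≤ π * S := by gcongr; linarith [pi_gt_three]
  linarith

end Averaging

section PiecewiseAffine

/-- `E` is covered by `N` closed intervals of length `r`. -/
def CoveredByIntervals (E : Set ℝ) (N : ℕ) (r : ℝ) : Prop :=
  ∃ c : Fin N → ℝ, E ⊆ ⋃ i, Icc (c i) (c i + r)

/-- `g` is affine on each interval complementary to `E` in `[0, 2π]`. The condition is imposed on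
all open subintervals of the complement, which avoids naming its connected components. -/
def IsAffineOff (E : Set ℝ) (g : ℝ → ℝ) : Prop :=
  ∀ u v : ℝ, u < v → Ioo u v ⊆ Icc 0 (2 * π) \ E → ∃ a b : ℝ, ∀ t ∈ Ioo u v, g t = a * t + b

open Classical in
/-- The indices of the cells `[iε, (i+1)ε)`, among those of index in `[0, M)`, whose closure does
not meet `E`. -/
noncomputable def goodCells (M : ℤ) (ε : ℝ) (E : Set ℝ) : Finset ℤ :=
  {i ∈ Finset.Ico 0 M | Disjoint (Icc (i * ε) ((i + 1) * ε)) E}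

variable {M : ℤ} {ε : ℝ} {E : Set ℝ} {g : ℝ → ℝ} {N : ℕ}

lemma mem_goodCells {i : ℤ} : i ∈ goodCells M ε E ↔
    (0 ≤ i ∧ i < M) ∧ Disjoint (Icc (i * ε) ((i + 1) * ε)) E := by
  simp only [goodCells, Finset.mem_filter, Finset.mem_Ico]

lemma card_gaps_goodCells_le (hε : 0 < ε) (hE : CoveredByIntervals E N ε) :
    (gaps M (goodCells M ε E)).card ≤ 3 * N + 2 := by
  obtain ⟨c, hc⟩ := hE
  let meeting (n : Fin N) : Finset ℤ := Finset.Icc (⌈c n / ε⌉ - 1) (⌊c n / ε⌋ + 1)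
  have hcard (n : Fin N) : (meeting n).card ≤ 3 := by
    have := Int.floor_le_ceil (c n / ε)
    simp only [meeting, Int.card_Icc]
    lia
  have hsub : gaps M (goodCells M ε E) ⊆ insert (-1) (insert M (Finset.univ.biUnion meeting)) := by
    intro i hi
    simp only [gaps, Finset.mem_sdiff, Finset.mem_Icc, mem_goodCells] at hi
    obtain ⟨⟨h₁, h₂⟩, hbad⟩ := hi
    simp only [Finset.mem_insert, Finset.mem_biUnion, Finset.mem_univ, true_and, meeting,
      Finset.mem_Icc]
    by_cases hout : i = -1 ∨ i = M
    · exact hout.imp_right .inl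
    · obtain ⟨x, hx, hxE⟩ := not_disjoint_iff.mp fun h => hbad ⟨by lia, h⟩
      obtain ⟨n, hn⟩ := mem_iUnion.mp (hc hxE)
      refine .inr (.inr ⟨n, ?_, ?_⟩)
      · rw [sub_le_iff_le_add, Int.ceil_le, div_le_iff₀ hε]
        push_cast
        exact hn.1.trans hx.2
      · rw [← sub_le_iff_le_add, Int.le_floor, le_div_iff₀ hε]
        push_cast
        linarith [hn.2, hx.1]
  calc _ ≤ _ := Finset.card_le_card hsub
    _ ≤ (Finset.univ.biUnion meeting).card + 2 :=
      (Finset.card_insert_le _ _).trans (Nat.succ_le_succ (Finset.card_insert_le _ _))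
    _ ≤ 3 * N + 2 := by
      grw [Finset.card_biUnion_le_card_mul _ _ 3 fun n _ => hcard n]
      simp [mul_comm]

lemma affine_coeffs_unique {u v a b a' b' : ℝ} (huv : u < v)
    (h : ∀ t ∈ Ioo u v, a * t + b = a' * t + b') : a = a' ∧ b = b' := by
  obtain ⟨s, hus, hsv⟩ := exists_between huv
  obtain ⟨t, hst, htv⟩ := exists_between hsv
  have hs := h s ⟨hus, hsv⟩
  have ht := h t ⟨hus.trans hst, htv⟩
  have ha : a = a' := mul_right_cancel₀ (sub_pos.mpr hst).ne' (by linarith)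
  exact ⟨ha, by rw [ha] at hs; linarith⟩

lemma Icc_cell_subset (hε : 0 < ε) (hM : M * ε = 2 * π) {i : ℤ} (hi : i ∈ goodCells M ε E) :
    Icc (i * ε) ((i + 1) * ε) ⊆ Icc 0 (2 * π) \ E := by
  obtain ⟨⟨h₀, h₁⟩, hdisj⟩ := mem_goodCells.mp hi
  refine subset_sdiff.mpr ⟨Icc_subset_Icc (by positivity) ?_, hdisj⟩
  rw [← hM]
  gcongr
  exact_mod_cast h₁

lemma exists_affine_on_goodCells (hε : 0 < ε) (hM : M * ε = 2 * π) (hg : IsAffineOff E g) :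
    ∃ a b : ℤ → ℝ,
      (∀ i ∈ goodCells M ε E, ∀ t ∈ Ioo (i * ε) ((i + 1) * ε), g t = a i * t + b i) ∧
      ∀ i ∈ goodCells M ε E, i + 1 ∈ goodCells M ε E → a i = a (i + 1) ∧ b i = b (i + 1) := by
  have hcell : ∀ i : ℤ, ∃ a b : ℝ, i ∈ goodCells M ε E →
      ∀ t ∈ Ioo (i * ε) ((i + 1) * ε), g t = a * t + b := by
    intro i
    by_cases hi : i ∈ goodCells M ε E
    · obtain ⟨a, b, hab⟩ := hg _ _ (by linarith)
        (Ioo_subset_Icc_self.trans (Icc_cell_subset hε hM hi))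
      exact ⟨a, b, fun _ => hab⟩
    · exact ⟨0, 0, fun h => absurd h hi⟩
  choose a b hab using hcell
  refine ⟨a, b, hab, fun i hi hi' => ?_⟩
  have hsub : Ioo (i * ε) ((i + 2) * ε) ⊆ Icc 0 (2 * π) \ E := by
    intro t ht
    rcases le_total t ((i + 1) * ε) with hle | hle
    · exact Icc_cell_subset hε hM hi ⟨ht.1.le, hle⟩
    · refine Icc_cell_subset hε hM hi' ⟨by push_cast; exact hle, ?_⟩
      push_cast
      linarith [ht.2]
  obtain ⟨α, β, hαβ⟩ := hg _ _ (by linarith) hsub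
  obtain ⟨ha, hb⟩ := affine_coeffs_unique (u := i * ε) (v := (i + 1) * ε) (by linarith) fun t ht =>
    (hab i hi t ht).symm.trans (hαβ t ⟨ht.1, by linarith [ht.2]⟩)
  have hab' := hab (i + 1) hi'
  push_cast at hab'
  obtain ⟨ha', hb'⟩ := affine_coeffs_unique (u := (i + 1) * ε) (v := (i + 1 + 1) * ε)
    (by linarith) fun t ht =>
      (hab' t ht).symm.trans (hαβ t ⟨by linarith [ht.1], by linarith [ht.2]⟩)
  exact ⟨ha.trans ha'.symm, hb.trans hb'.symm⟩

lemma exists_isPatchwork_wave (hε : 0 < ε) (hM : M * ε = 2 * π) (hg : IsAffineOff E g) :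
    ∃ a b : ℤ → ℝ,
      IsPatchwork M ε (goodCells M ε E) (fun i => wave (a i) (b i))
        (fun t => Complex.exp (Complex.I * (g t : ℂ))) ∧
      ∀ i ∈ goodCells M ε E, i + 1 ∈ goodCells M ε E → a i = a (i + 1) := by
  obtain ⟨a, b, hab, hadj⟩ := exists_affine_on_goodCells hε hM hg
  refine ⟨a, b, ⟨fun i hi => Finset.mem_Ico.mpr (mem_goodCells.mp hi).1, fun i hi t ht => ?_,
    fun i hi hi' => ?_⟩, fun i hi hi' => (hadj i hi hi').1⟩
  · simp only [wave, hab i hi t ht]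
  · rw [(hadj i hi hi').1, (hadj i hi hi').2]

lemma card_Icc_ceil_floor_le {u v : ℝ} (huv : u ≤ v) :
    ((Finset.Icc ⌈u⌉ ⌊v⌋).card : ℝ) ≤ v - u + 1 := by
  have hlen : ((⌊v⌋ + 1 - ⌈u⌉ : ℤ) : ℝ) ≤ v - u + 1 := by
    push_cast
    linarith [Int.floor_le v, Int.le_ceil u]
  rw [Int.card_Icc, ← Int.cast_natCast, Int.ofNat_toNat, Int.cast_max]
  exact max_le hlen (by push_cast; linarith)

lemma one_le_abs_mul_sub_of_notMem_Icc (hε : 0 < ε) {α : ℝ} {k : ℤ}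
    (hk : k ∉ Finset.Icc ⌈α - 1 / ε⌉ ⌊α + 1 / ε⌋) : 1 ≤ |ε * (α - k)| := by
  contrapose! hk
  rw [abs_mul, abs_of_pos hε, ← lt_div_iff₀' hε, abs_lt] at hk
  rw [Finset.mem_Icc, Int.ceil_le, Int.le_floor]
  constructor <;> linarith [hk.1, hk.2]

theorem exists_exceptional_frequencies (hε : 0 < ε) (hM : M * ε = 2 * π)
    (hE : CoveredByIntervals E N ε) (hg : IsAffineOff E g) :
    ∃ X : Finset ℤ, (X.card : ℝ) ≤ (3 * N + 2) * (2 / ε + 1) ∧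
      ∀ A : Finset ℤ, Disjoint A X →
        ∑ k ∈ A, ‖fourierCoef (fun t => Complex.exp (Complex.I * (g t : ℂ))) k‖ ^ 2 ≤
          kernelMoment ^ 2 * ((3 * N + 2) * ε) := by
  -- `g` is arbitrary on `E`: where `e^{ig}` is not integrable, all its coefficients are `0`.
  by_cases hfi : IntervalIntegrable (fun t => Complex.exp (Complex.I * (g t : ℂ))) volume 0 (2 * π)
  swap
  · refine ⟨∅, ?_, fun A _ => ?_⟩
    · rw [Finset.card_empty, Nat.cast_zero]
      positivity
    · simp only [fourierCoef_of_not_intervalIntegrable hfi, norm_zero, ne_eq, OfNat.ofNat_ne_zero,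
        not_false_eq_true, zero_pow, Finset.sum_const_zero]
      positivity
  obtain ⟨a, b, hpatch, hadj⟩ := exists_isPatchwork_wave hε hM hg
  have hgaps : ((gaps M (goodCells M ε E)).card : ℝ) ≤ 3 * N + 2 := by
    exact_mod_cast card_gaps_goodCells_le hε hE
  let window (α : ℝ) : Finset ℤ := Finset.Icc ⌈α - 1 / ε⌉ ⌊α + 1 / ε⌋
  have hwindow (α : ℝ) : ((window α).card : ℝ) ≤ 2 / ε + 1 :=
    (card_Icc_ceil_floor_le (by linarith [one_div_pos.mpr hε])).trans_eq (by ring)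
  refine ⟨((goodCells M ε E).image a).biUnion window, ?_, fun A hA => ?_⟩
  · calc _ ≤ ∑ α ∈ (goodCells M ε E).image a, ((window α).card : ℝ) := by
          exact_mod_cast Finset.card_biUnion_le
      _ ≤ ((goodCells M ε E).image a).card * (2 / ε + 1) := by
          simpa only [nsmul_eq_mul] using Finset.sum_le_card_nsmul _ _ _ fun α _ => hwindow α
      _ ≤ (3 * N + 2) * (2 / ε + 1) := by
          gcongr
          refine le_trans ?_ hgaps
          exact_mod_cast card_image_le_card_gaps hpatch.subset hadj
  · refine (sum_norm_fourierCoef_sq_le_of_far A hε hM hpatch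
      (fun x => (Complex.norm_exp_I_mul_ofReal _).le) hfi fun i hi k hk => ?_).trans (by gcongr)
    exact one_le_abs_mul_sub_of_notMem_Icc hε fun hmem => Finset.disjoint_left.mp hA hk
      (Finset.mem_biUnion.mpr ⟨a i, Finset.mem_image_of_mem a hi, hmem⟩)

end PiecewiseAffine

section MultiscaleSum

lemma rpow_le_rpow_mul_sq_add {p η x : ℝ} (hp₀ : 0 ≤ p) (hp₂ : p ≤ 2) (hη : 0 < η) (hx : 0 ≤ x) :
    x ^ p ≤ η ^ (p - 2) * x ^ 2 + η ^ p := by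
  rcases le_total x η with hle | hle
  · exact (rpow_le_rpow hx hle hp₀).trans (le_add_of_nonneg_left (by positivity))
  · have hx' : 0 < x := hη.trans_le hle
    calc x ^ p = x ^ (p - 2) * x ^ 2 := by rw [← rpow_natCast x 2, ← rpow_add hx']; norm_num
      _ ≤ η ^ (p - 2) * x ^ 2 := by
        gcongr ?_ * _
        exact rpow_le_rpow_of_nonpos hη hle (by linarith)
      _ ≤ _ := le_add_of_nonneg_right (by positivity)

lemma sum_rpow_le_of_sum_sq_le {ι : Type*} {F : ι → ℝ} (hF : ∀ k, 0 ≤ F k) {p η D n : ℝ}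
    (hp₀ : 0 ≤ p) (hp₂ : p ≤ 2) (hη : 0 < η) {K : Finset ι} (hcard : (K.card : ℝ) ≤ n)
    (hsq : ∑ k ∈ K, F k ^ 2 ≤ D * η ^ 2) : ∑ k ∈ K, F k ^ p ≤ (D + n) * η ^ p := by
  calc ∑ k ∈ K, F k ^ p ≤ ∑ k ∈ K, (η ^ (p - 2) * F k ^ 2 + η ^ p) :=
        Finset.sum_le_sum fun k _ => rpow_le_rpow_mul_sq_add hp₀ hp₂ hη (hF k)
    _ = η ^ (p - 2) * ∑ k ∈ K, F k ^ 2 + K.card * η ^ p := by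
        rw [Finset.sum_add_distrib, Finset.mul_sum, Finset.sum_const, nsmul_eq_mul]
    _ ≤ η ^ (p - 2) * (D * η ^ 2) + n * η ^ p := by gcongr
    _ = (D + n) * η ^ p := by
        rw [rpow_sub hη, rpow_ofNat]
        field_simp

theorem sum_rpow_le_multiscale {ι : Type*} {F : ι → ℝ} (hF₀ : ∀ k, 0 ≤ F k)
    (hF₁ : ∀ k, F k ≤ 1) {p : ℝ} (hp₀ : 0 ≤ p) (hp₂ : p ≤ 2) {ε τ : ℕ → ℝ} (hε : ∀ l, 0 < ε l)
    {c D r : ℝ} (hc : 0 ≤ c) (hτ : ∀ l, τ (l + 1) ≤ r * τ l) {X : ℕ → Finset ι}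
    (hX : ∀ l, ((X l).card : ℝ) ≤ c * τ l)
    (hsq : ∀ l (K : Finset ι), Disjoint K (X l) → ∑ k ∈ K, F k ^ 2 ≤ D * τ l * ε l ^ 2)
    (L : ℕ) {K : Finset ι} (hK : (K.card : ℝ) ≤ c * τ L) :
    ∑ k ∈ K, F k ^ p ≤ c * τ 0 + (D + r * c) * ∑ l ∈ Finset.range L, τ l * ε l ^ p := by
  classical
  induction L generalizing K with
  | zero =>
    rw [Finset.range_zero, Finset.sum_empty, mul_zero, add_zero]
    calc ∑ k ∈ K, F k ^ p ≤ ∑ k ∈ K, 1 :=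
          Finset.sum_le_sum fun k _ => rpow_le_one (hF₀ k) (hF₁ k) hp₀
      _ = K.card := by simp
      _ ≤ c * τ 0 := hK
  | succ L ih =>
    -- The exceptional part `K ∩ X L` is small enough for the previous, coarser scale.
    have hnear : ((K ∩ X L).card : ℝ) ≤ c * τ L :=
      le_trans (by exact_mod_cast Finset.card_le_card Finset.inter_subset_right) (hX L)
    have hfar : ((K \ X L).card : ℝ) ≤ c * (r * τ L) := by
      refine le_trans (le_trans ?_ hK) (by gcongr; exact hτ L)
      exact_mod_cast Finset.card_le_card Finset.sdiff_subset
    rw [← Finset.sum_inter_add_sum_sdiff K (X L), Finset.sum_range_succ]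
    linarith [ih hnear, sum_rpow_le_of_sum_sq_le hF₀ hp₀ hp₂ (hε L) hfar
      (hsq L _ Finset.sdiff_disjoint)]

end MultiscaleSum

section IntegralComparison

variable {φ : ℝ → ℝ}

lemma intervalIntegrable_of_antitoneOn_Ioi (hφ : AntitoneOn φ (Ioi 0)) {x y : ℝ} (hx : 0 < x)
    (hy : 0 < y) : IntervalIntegrable φ volume x y :=
  AntitoneOn.intervalIntegrable (hφ.mono fun _ ht => (lt_min hx hy).trans_le ht.1)

lemma sum_mul_le_two_mul_integral (hφ : AntitoneOn φ (Ioi 0)) (hφ₀ : ∀ x, 0 < x → 0 ≤ φ x)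
    {τ : ℕ → ℝ} (hτ₀ : ∀ l, 0 < τ l) (hτ : ∀ l, 2 * τ l ≤ τ (l + 1)) (L : ℕ) :
    ∑ l ∈ Finset.range L, τ l * φ (τ l) ≤ 2 * ∫ x in (τ 0 / 2)..(τ L / 2), φ x := by
  have hint {x y : ℝ} (hx : 0 < x) (hy : 0 < y) :=
    intervalIntegrable_of_antitoneOn_Ioi hφ hx hy
  induction L with
  | zero => simp
  | succ L ih =>
    have hpos := hτ₀ L
    have hhalf : 0 < τ L / 2 := half_pos hpos
    have hstep : τ L ≤ τ (L + 1) / 2 := by linarith [hτ L]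
    have hblock : τ L / 2 * φ (τ L) ≤ ∫ x in (τ L / 2)..(τ L), φ x := by
      have := intervalIntegral.integral_mono_on (by linarith) intervalIntegrable_const
        (hint hhalf hpos) fun x hx =>
          hφ (hhalf.trans_le hx.1) hpos hx.2
      rw [intervalIntegral.integral_const, smul_eq_mul] at this
      linarith
    have htail : 0 ≤ ∫ x in (τ L)..(τ (L + 1) / 2), φ x :=
      intervalIntegral.integral_nonneg hstep fun x hx => hφ₀ x (hpos.trans_le hx.1)
    rw [Finset.sum_range_succ, ← intervalIntegral.integral_add_adjacent_intervals
      (hint (half_pos (hτ₀ 0)) hhalf) (hint hhalf (half_pos (hτ₀ (L + 1)))),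
      ← intervalIntegral.integral_add_adjacent_intervals (hint hhalf hpos)
      (hint hpos (half_pos (hτ₀ (L + 1))))]
    linarith

lemma exists_one_add_integral_le (hφ : AntitoneOn φ (Ioi 0)) (hφ₀ : ∀ x, 0 < x → 0 < φ x)
    {η : ℝ} (hη : 0 < η) (hη₁ : η ≤ 1) :
    ∃ C : ℝ, 0 < C ∧ ∀ y : ℝ, 2 ≤ y → 1 + ∫ x in η..y, φ x ≤ C * ∫ x in (1:ℝ)..y, φ x := by
  have hint {x y : ℝ} (hx : 0 < x) (hy : 0 < y) :=
    intervalIntegrable_of_antitoneOn_Ioi hφ hx hy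
  set J := ∫ x in η..1, φ x
  set I := ∫ x in (1:ℝ)..2, φ x
  have hJ : 0 ≤ J := intervalIntegral.integral_nonneg hη₁ fun x hx => (hφ₀ x (hη.trans_le hx.1)).le
  have hI : 0 < I := intervalIntegral.intervalIntegral_pos_of_pos_on (hint one_pos two_pos)
    (fun x hx => hφ₀ x (one_pos.trans hx.1)) one_lt_two
  refine ⟨(1 + J) / I + 1, by positivity, fun y hy => ?_⟩
  have hy₀ : 0 < y := by linarith
  have htail : 0 ≤ ∫ x in (2:ℝ)..y, φ x :=
    intervalIntegral.integral_nonneg hy fun x hx => (hφ₀ x (by linarith [hx.1])).le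
  have hI_le : I ≤ ∫ x in (1:ℝ)..y, φ x := by
    rw [← intervalIntegral.integral_add_adjacent_intervals (hint one_pos two_pos)
      (hint two_pos hy₀)]
    linarith
  rw [← intervalIntegral.integral_add_adjacent_intervals (hint hη one_pos) (hint one_pos hy₀)]
  have hscale : 1 + J ≤ (1 + J) / I * ∫ x in (1:ℝ)..y, φ x := by
    rw [div_mul_eq_mul_div, le_div_iff₀ hI]
    gcongr
  linarith

end IntegralComparison

section Modulus

variable {ω χinv : ℝ → ℝ}

lemma le_of_mul_le_of_rightInverse (hω_mono : MonotoneOn ω (Ici 0)) (hω_pos : ∀ δ, 0 < δ → 0 < ω δ)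
    (hχinv : ∀ y, 0 ≤ y → 0 ≤ χinv y ∧ χinv y * ω (χinv y) = y) {δ y : ℝ} (hy : 0 ≤ y)
    (hδ : δ * ω δ ≤ y) : δ ≤ χinv y := by
  obtain ⟨hχ₀, hχ⟩ := hχinv y hy
  by_contra! hlt
  have hδ₀ : 0 < δ := hχ₀.trans_lt hlt
  have hle : ω (χinv y) ≤ ω δ := hω_mono hχ₀ hδ₀.le hlt.le
  nlinarith [mul_le_mul_of_nonneg_left hle hχ₀, mul_lt_mul_of_pos_right hlt (hω_pos δ hδ₀)]

lemma rightInverse_pos (hχinv : ∀ y, 0 ≤ y → 0 ≤ χinv y ∧ χinv y * ω (χinv y) = y) {y : ℝ}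
    (hy : 0 < y) : 0 < χinv y := by
  obtain ⟨hχ₀, hχ⟩ := hχinv y hy.le
  refine hχ₀.lt_of_ne' fun h => hy.ne ?_
  rw [← hχ, h, zero_mul]

lemma antitoneOn_rpow_rightInverse_one_div (hω_mono : MonotoneOn ω (Ici 0))
    (hω_pos : ∀ δ, 0 < δ → 0 < ω δ)
    (hχinv : ∀ y, 0 ≤ y → 0 ≤ χinv y ∧ χinv y * ω (χinv y) = y) {p : ℝ} (hp : 0 ≤ p) :
    AntitoneOn (fun τ => χinv (1 / τ) ^ p) (Ioi 0) := by
  intro s hs t ht hst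
  have hs' : 0 ≤ 1 / s := (one_div_pos.mpr hs).le
  obtain ⟨hχ₀, hχ⟩ := hχinv (1 / t) (one_div_pos.mpr ht).le
  exact rpow_le_rpow hχ₀ (le_of_mul_le_of_rightInverse hω_mono hω_pos hχinv hs'
    (hχ.trans_le (one_div_le_one_div_of_le hs hst))) hp

/-- The length of a cell in the dyadic subdivision of level `l` of a period. -/
noncomputable def cellLength (l : ℕ) : ℝ := 2 * π / 2 ^ l

/-- The frequency attached to the dyadic level `l`, namely `1 / χ(ε)` for `χ(δ) = δ ω(δ)` and `ε`
the length of a cell: the order of magnitude of the number of exceptional frequencies. -/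
noncomputable def levelFreq (ω : ℝ → ℝ) (l : ℕ) : ℝ := 1 / (cellLength l * ω (cellLength l))

lemma cellLength_pos (l : ℕ) : 0 < cellLength l := by
  unfold cellLength; positivity

lemma cellLength_le (l : ℕ) : cellLength l ≤ 2 * π :=
  div_le_self two_pi_pos.le (one_le_pow₀ one_le_two)

lemma two_mul_cellLength_succ (l : ℕ) : 2 * cellLength (l + 1) = cellLength l := by
  unfold cellLength
  rw [pow_succ]
  field_simp

lemma levelFreq_pos (hω_pos : ∀ δ, 0 < δ → 0 < ω δ) (l : ℕ) : 0 < levelFreq ω l :=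
  one_div_pos.mpr (mul_pos (cellLength_pos l) (hω_pos _ (cellLength_pos l)))

lemma levelFreq_zero_le_one (hω_2pi : ω (2 * π) = 1) : levelFreq ω 0 ≤ 1 := by
  rw [levelFreq, cellLength, pow_zero, div_one, hω_2pi, mul_one]
  exact (div_le_one two_pi_pos).mpr (by linarith [pi_gt_three])

lemma two_mul_levelFreq_le_succ (hω_mono : MonotoneOn ω (Ici 0)) (hω_pos : ∀ δ, 0 < δ → 0 < ω δ)
    (l : ℕ) : 2 * levelFreq ω l ≤ levelFreq ω (l + 1) := by
  have hε := cellLength_pos (l + 1)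
  have hω := hω_pos _ hε
  have hle : ω (cellLength (l + 1)) ≤ ω (2 * cellLength (l + 1)) :=
    hω_mono hε.le (by positivity : (0 : ℝ) ≤ _) (by linarith)
  rw [levelFreq, levelFreq, ← two_mul_cellLength_succ l]
  calc 2 * (1 / (2 * cellLength (l + 1) * ω (2 * cellLength (l + 1)))) ≤
        2 * (1 / (2 * cellLength (l + 1) * ω (cellLength (l + 1)))) := by gcongr
    _ = _ := by field_simp

lemma levelFreq_succ_le_four_mul (hω_pos : ∀ δ, 0 < δ → 0 < ω δ)
    (hω_doubling : ∀ δ, 0 < δ → δ ≤ 2 * π → ω (2 * δ) ≤ 2 * ω δ) (l : ℕ) :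
    levelFreq ω (l + 1) ≤ 4 * levelFreq ω l := by
  have hε := cellLength_pos (l + 1)
  have hω := hω_pos _ hε
  have hω' := hω_pos (2 * cellLength (l + 1)) (by positivity)
  have hle := hω_doubling _ hε (cellLength_le _)
  rw [levelFreq, levelFreq, ← two_mul_cellLength_succ l]
  calc 1 / (cellLength (l + 1) * ω (cellLength (l + 1))) =
        4 * (1 / (2 * cellLength (l + 1) * (2 * ω (cellLength (l + 1))))) := by field_simp; norm_num
    _ ≤ _ := by gcongr

lemma exists_levelFreq_le_lt (hω_mono : MonotoneOn ω (Ici 0)) (hω_pos : ∀ δ, 0 < δ → 0 < ω δ)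
    {x : ℝ} (hx : levelFreq ω 0 ≤ x) : ∃ L, levelFreq ω L ≤ x ∧ x < levelFreq ω (L + 1) := by
  have hunbounded := tendsto_atTop_of_geom_le (levelFreq_pos hω_pos 0) one_lt_two
    (two_mul_levelFreq_le_succ hω_mono hω_pos)
  by_contra! hsucc
  obtain ⟨L, hL⟩ := (hunbounded.eventually_gt_atTop x).exists
  exact hL.not_ge (Nat.rec hx hsucc L)

lemma cellLength_le_rightInverse (hω_mono : MonotoneOn ω (Ici 0)) (hω_pos : ∀ δ, 0 < δ → 0 < ω δ)
    (hχinv : ∀ y, 0 ≤ y → 0 ≤ χinv y ∧ χinv y * ω (χinv y) = y) (l : ℕ) :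
    cellLength l ≤ χinv (1 / levelFreq ω l) :=
  le_of_mul_le_of_rightInverse hω_mono hω_pos hχinv (one_div_pos.mpr (levelFreq_pos hω_pos l)).le
    (one_div_one_div _).ge

end Modulus

section Covering

lemma CoveredByIntervals.mono {E : Set ℝ} {N : ℕ} {r r' : ℝ} (h : CoveredByIntervals E N r)
    (hr : r ≤ r') : CoveredByIntervals E N r' := by
  obtain ⟨c, hc⟩ := h
  exact ⟨c, hc.trans (iUnion_mono fun i => Icc_subset_Icc_right (by linarith))⟩

lemma exists_coveredByIntervals_of_dyadic {ω : ℝ → ℝ} {ρ : ℕ → ℝ} {E : Set ℝ}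
    (hω_mono : MonotoneOn ω (Ici 0)) (hω_pos : ∀ δ, 0 < δ → 0 < ω δ) (hω_2pi : ω (2 * π) = 1)
    (hρ_pos : ∀ j, 0 < ρ j) (hρ : ∀ j : ℕ, ω (ρ j) = (2 : ℝ) ^ (-(j : ℝ)))
    (hE : ∀ j, CoveredByIntervals E (2 ^ j) (ρ j)) {δ : ℝ} (hδ : 0 < δ) (hδ' : δ ≤ 2 * π) :
    ∃ N : ℕ, N * ω δ ≤ 2 ∧ CoveredByIntervals E N δ := by
  have hω_le : ω δ ≤ 1 := hω_2pi ▸ hω_mono hδ.le two_pi_pos.le hδ'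
  obtain ⟨j, hlt, hle⟩ := exists_nat_pow_near_of_lt_one (hω_pos δ hδ) hω_le
    (one_half_pos (α := ℝ)) one_half_lt_one
  have hρδ : ρ (j + 1) ≤ δ := by
    by_contra! h
    have := hω_mono hδ.le (hρ_pos (j + 1)).le h.le
    rw [hρ, rpow_neg two_pos.le, rpow_natCast, ← inv_pow, ← one_div] at this
    exact this.not_gt hlt
  refine ⟨2 ^ (j + 1), ?_, (hE (j + 1)).mono hρδ⟩
  calc ((2 ^ (j + 1) : ℕ) : ℝ) * ω δ ≤ (2 ^ (j + 1) : ℕ) * (1 / 2) ^ j := by gcongr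
    _ = 2 := by push_cast; rw [pow_succ, one_div, inv_pow]; field_simp

end Covering

section MainEstimate

variable {ω χinv : ℝ → ℝ} {E : Set ℝ} {g : ℝ → ℝ} {B p : ℝ}

lemma exists_exceptional_frequencies_level (hω_mono : MonotoneOn ω (Ici 0))
    (hω_pos : ∀ δ, 0 < δ → 0 < ω δ) (hω_2pi : ω (2 * π) = 1)
    (hE : ∀ δ, 0 < δ → δ ≤ 2 * π → ∃ N : ℕ, N * ω δ ≤ B ∧ CoveredByIntervals E N δ)
    (hg : IsAffineOff E g) (l : ℕ) :
    ∃ X : Finset ℤ, (X.card : ℝ) ≤ 10 * (3 * B + 2) * levelFreq ω l ∧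
      ∀ A : Finset ℤ, Disjoint A X →
        ∑ k ∈ A, ‖fourierCoef (fun t => Complex.exp (Complex.I * (g t : ℂ))) k‖ ^ 2 ≤
          kernelMoment ^ 2 * (3 * B + 2) * levelFreq ω l * cellLength l ^ 2 := by
  have hε := cellLength_pos l
  have hε' := cellLength_le l
  have hω := hω_pos _ hε
  obtain ⟨N, hNB, hN⟩ := hE _ hε hε'
  have hM : (((2 ^ l : ℕ) : ℤ) : ℝ) * cellLength l = 2 * π := by
    rw [cellLength]
    push_cast
    field_simp
  obtain ⟨X, hX, hsq⟩ := exists_exceptional_frequencies hε hM hN hg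
  have hcells : 3 * N + 2 ≤ (3 * B + 2) * (cellLength l * levelFreq ω l) := by
    have hω_le : ω (cellLength l) ≤ 1 := hω_2pi ▸ hω_mono hε.le two_pi_pos.le hε'
    rw [levelFreq, one_div, mul_inv, mul_inv_cancel_left₀ hε.ne', ← div_eq_mul_inv, le_div_iff₀ hω]
    linarith
  have hwindow : 2 / cellLength l + 1 ≤ 10 / cellLength l := by
    rw [div_add_one hε.ne']
    gcongr
    linarith [pi_lt_four]
  refine ⟨X, ?_, fun A hA => ?_⟩
  · calc (X.card : ℝ) ≤ (3 * N + 2) * (2 / cellLength l + 1) := hX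
      _ ≤ (3 * B + 2) * (cellLength l * levelFreq ω l) * (10 / cellLength l) := by
        gcongr
        exact le_trans (by positivity) hcells
      _ = 10 * (3 * B + 2) * levelFreq ω l := by field_simp
  · calc _ ≤ kernelMoment ^ 2 * ((3 * N + 2) * cellLength l) := hsq A hA
      _ ≤ kernelMoment ^ 2 * ((3 * B + 2) * (cellLength l * levelFreq ω l) * cellLength l) := by
        gcongr
      _ = _ := by ring

lemma sum_levelFreq_mul_rpow_le_integral (hω_mono : MonotoneOn ω (Ici 0))
    (hω_pos : ∀ δ, 0 < δ → 0 < ω δ)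
    (hχinv : ∀ y, 0 ≤ y → 0 ≤ χinv y ∧ χinv y * ω (χinv y) = y) (hp : 0 ≤ p) {L : ℕ} {y : ℝ}
    (hy : levelFreq ω L ≤ 2 * y) :
    ∑ l ∈ Finset.range L, levelFreq ω l * cellLength l ^ p ≤
      2 * ∫ τ in (levelFreq ω 0 / 2)..y, χinv (1 / τ) ^ p := by
  have hanti := antitoneOn_rpow_rightInverse_one_div hω_mono hω_pos hχinv hp
  have hnonneg : ∀ τ, 0 < τ → 0 ≤ χinv (1 / τ) ^ p := fun τ hτ =>
    (rpow_pos_of_pos (rightInverse_pos hχinv (one_div_pos.mpr hτ)) p).le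
  have hτ := levelFreq_pos hω_pos
  have hdouble := two_mul_levelFreq_le_succ hω_mono hω_pos
  have hle : levelFreq ω 0 ≤ levelFreq ω L :=
    monotone_nat_of_le_succ (fun l => by linarith [hτ l, hdouble l]) L.zero_le
  calc ∑ l ∈ Finset.range L, levelFreq ω l * cellLength l ^ p ≤
        ∑ l ∈ Finset.range L, levelFreq ω l * χinv (1 / levelFreq ω l) ^ p := by
        refine Finset.sum_le_sum fun l _ => mul_le_mul_of_nonneg_left ?_ (hτ l).le
        exact rpow_le_rpow (cellLength_pos l).le
          (cellLength_le_rightInverse hω_mono hω_pos hχinv l) hp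
    _ ≤ 2 * ∫ τ in (levelFreq ω 0 / 2)..(levelFreq ω L / 2), χinv (1 / τ) ^ p :=
        sum_mul_le_two_mul_integral hanti hnonneg hτ hdouble L
    _ ≤ 2 * ∫ τ in (levelFreq ω 0 / 2)..y, χinv (1 / τ) ^ p := by
        gcongr
        refine intervalIntegral.integral_mono_interval le_rfl (by linarith) (by linarith)
          (ae_restrict_of_forall_mem measurableSet_Ioc fun τ hτ' => ?_)
          (intervalIntegrable_of_antitoneOn_Ioi hanti (half_pos (hτ 0)) (by linarith [hτ L]))
        exact hnonneg τ ((half_pos (hτ 0)).trans hτ'.1)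

lemma card_Icc_neg_floor_le {y : ℝ} (hy : 2 ≤ y) :
    ((Finset.Icc (-⌊2 * y⌋) ⌊2 * y⌋).card : ℝ) ≤ 5 * y := by
  rw [← Int.ceil_neg]
  exact (card_Icc_ceil_floor_le (by linarith)).trans (by linarith)

theorem exists_sum_rpow_fourierCoef_le (hp : 0 ≤ p) (hp₂ : p ≤ 2)
    (hω_mono : MonotoneOn ω (Ici 0)) (hω_pos : ∀ δ, 0 < δ → 0 < ω δ) (hω_2pi : ω (2 * π) = 1)
    (hω_doubling : ∀ δ, 0 < δ → δ ≤ 2 * π → ω (2 * δ) ≤ 2 * ω δ)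
    (hχinv : ∀ y, 0 ≤ y → 0 ≤ χinv y ∧ χinv y * ω (χinv y) = y)
    (hE : ∀ δ, 0 < δ → δ ≤ 2 * π → ∃ N : ℕ, N * ω δ ≤ B ∧ CoveredByIntervals E N δ) :
    ∃ c : ℝ, 0 < c ∧ ∀ y : ℝ, 2 ≤ y → ∀ g : ℝ → ℝ, IsAffineOff E g →
      ∑ k ∈ Finset.Icc (-⌊2 * y⌋) ⌊2 * y⌋,
        ‖fourierCoef (fun t => Complex.exp (Complex.I * (g t : ℂ))) k‖ ^ p ≤
        c * (1 + ∫ τ in (levelFreq ω 0 / 2)..y, χinv (1 / τ) ^ p) := by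
  have hB : 0 ≤ B := by
    obtain ⟨N, hN, -⟩ := hE _ two_pi_pos le_rfl
    exact le_trans (by rw [hω_2pi]; positivity) hN
  set c := 10 * (3 * B + 2)
  set D := kernelMoment ^ 2 * (3 * B + 2)
  have hD : 0 ≤ D := by positivity
  have hc₁ : 10 ≤ c := by linarith
  refine ⟨c + 2 * (D + 4 * c), by positivity, fun y hy g hg => ?_⟩
  have hτ₀ := levelFreq_zero_le_one hω_2pi
  obtain ⟨L, hL, hL'⟩ := exists_levelFreq_le_lt hω_mono hω_pos (x := 2 * y) (by linarith)
  choose X hX hsq using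
    exists_exceptional_frequencies_level hω_mono hω_pos hω_2pi hE hg
  have hgrowth := levelFreq_succ_le_four_mul hω_pos hω_doubling
  have hcard : ((Finset.Icc (-⌊2 * y⌋) ⌊2 * y⌋).card : ℝ) ≤ c * levelFreq ω L := by
    nlinarith [card_Icc_neg_floor_le hy, hgrowth L, hc₁]
  have hsum := sum_rpow_le_multiscale (fun k => norm_nonneg _)
    (norm_fourierCoef_le_one fun t => (Complex.norm_exp_I_mul_ofReal (g t)).le) hp hp₂
    cellLength_pos (by linarith) hgrowth hX hsq L hcard
  have hintegral := sum_levelFreq_mul_rpow_le_integral hω_mono hω_pos hχinv hp hL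
  have hnonneg : 0 ≤ ∫ τ in (levelFreq ω 0 / 2)..y, χinv (1 / τ) ^ p := by
    simpa using sum_levelFreq_mul_rpow_le_integral hω_mono hω_pos hχinv hp (L := 0) (y := y)
      (by linarith)
  nlinarith

theorem statement12_general (hp : 0 ≤ p) (hp₂ : p ≤ 2)
    (hω_mono : MonotoneOn ω (Ici 0)) (hω_pos : ∀ δ, 0 < δ → 0 < ω δ) (hω_2pi : ω (2 * π) = 1)
    (hω_doubling : ∀ δ, 0 < δ → δ ≤ 2 * π → ω (2 * δ) ≤ 2 * ω δ)
    (hχinv : ∀ y, 0 ≤ y → 0 ≤ χinv y ∧ χinv y * ω (χinv y) = y)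
    (hE : ∀ δ, 0 < δ → δ ≤ 2 * π → ∃ N : ℕ, N * ω δ ≤ B ∧ CoveredByIntervals E N δ) :
    ∃ c : ℝ, 0 < c ∧ ∀ lam : ℝ, 2 ≤ lam → ∀ g : ℝ → ℝ, IsAffineOff E g →
      ∑ k ∈ Finset.Icc (-⌊2 * lam⌋) ⌊2 * lam⌋,
        ‖fourierCoef (fun t => Complex.exp (Complex.I * (g t : ℂ))) k‖ ^ p ≤
        c * ∫ τ in (1:ℝ)..lam, χinv (1 / τ) ^ p := by
  obtain ⟨c, hc, hbound⟩ :=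
    exists_sum_rpow_fourierCoef_le hp hp₂ hω_mono hω_pos hω_2pi hω_doubling hχinv hE
  obtain ⟨C, hC, hcompare⟩ := exists_one_add_integral_le
    (antitoneOn_rpow_rightInverse_one_div hω_mono hω_pos hχinv hp)
    (fun τ hτ => rpow_pos_of_pos (rightInverse_pos hχinv (one_div_pos.mpr hτ)) p)
    (half_pos (levelFreq_pos hω_pos 0)) (by linarith [levelFreq_zero_le_one hω_2pi])
  refine ⟨c * C, mul_pos hc hC, fun lam hlam g hg => (hbound lam hlam g hg).trans ?_⟩
  rw [mul_assoc]
  exact mul_le_mul_of_nonneg_left (hcompare lam hlam) hc.le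

end MainEstimate

/-- Lemma 7: for 1 < p < 2 and g linear on each interval complementary
to the Cantor-type set E, Σ_{|k|≤2λ} |(e^{ig})^∧(k)|^p ≤ c_p·(Θ_p(λ))^p,
where (Θ_p(y))^p = ∫₁^y (χ^{-1}(1/τ))^p dτ. -/
theorem statement12
    (p : ℝ) (hp1 : 1 < p) (hp2 : p < 2)
    -- ω is a modulus of continuity: continuous non-decreasing on [0,∞), ω(0)=0, ω(δ)>0 for δ>0,
    -- with χ(δ) = δ·ω(δ) strictly increasing and unbounded, and χinv its inverse.
    (ω : ℝ → ℝ)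
    (hω_cont : ContinuousOn ω (Ici 0)) (hω_mono : MonotoneOn ω (Ici 0))
    (hω_zero : ω 0 = 0) (hω_pos : ∀ δ : ℝ, 0 < δ → 0 < ω δ)
    (hχ_mono : StrictMonoOn (fun δ => δ * ω δ) (Ici 0))
    (hχ_unbdd : ∀ y : ℝ, ∃ δ : ℝ, 0 ≤ δ ∧ y < δ * ω δ)
    (χinv : ℝ → ℝ)
    (hχinv_left : ∀ δ : ℝ, 0 ≤ δ → χinv (δ * ω δ) = δ)
    (hχinv_right : ∀ y : ℝ, 0 ≤ y → 0 ≤ χinv y ∧ χinv y * ω (χinv y) = y)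
    (hω_2pi : ω (2 * Real.pi) = 1)
    (hω_doubling : ∀ δ : ℝ, 0 < δ → δ ≤ 2 * Real.pi → ω (2 * δ) < 2 * ω δ)
    (ρ : ℕ → ℝ) (hρ_pos : ∀ j : ℕ, 0 < ρ j) (hρ0 : ρ 0 = 2 * Real.pi)
    (hρ : ∀ j : ℕ, ω (ρ j) = (2 : ℝ) ^ (-(j : ℝ)))
    (E : Set ℝ) (hE_sub : E ⊆ Icc 0 (2 * Real.pi)) (hE_closed : IsClosed E)
    (hE_cover : ∀ j : ℕ, ∃ centers : Fin (2 ^ j) → ℝ,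
      E ⊆ ⋃ i : Fin (2 ^ j), Icc (centers i) (centers i + ρ j)) :
    ∃ c : ℝ, 0 < c ∧
      ∀ lam : ℝ, 2 ≤ lam →
        ∀ g : ℝ → ℝ,
          (∀ u v : ℝ, u < v → Ioo u v ⊆ Icc 0 (2 * Real.pi) \ E →
            ∃ a b : ℝ, ∀ t ∈ Ioo u v, g t = a * t + b) →
          ∑ k ∈ Finset.Icc (-⌊2 * lam⌋) ⌊2 * lam⌋,
            ‖fourierCoef (fun t => Complex.exp (Complex.I * (g t : ℂ))) k‖ ^ p
            ≤ c * ∫ τ in (1:ℝ)..lam, (χinv (1 / τ)) ^ p := by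
  exact statement12_general (by linarith) hp2.le hω_mono hω_pos hω_2pi
    (fun δ h h' => (hω_doubling δ h h').le) hχinv_right fun δ =>
      exists_coveredByIntervals_of_dyadic hω_mono hω_pos hω_2pi hρ_pos hρ hE_cover
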